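/- There exist n ≥ 1 and a monotone map F : (Fin n → Bool) → (Fin n → Bool) (pointwise order) such that F admits no monotone sequentialization: for every permutation π of Fin n and every family (G_i)_{i : Fin n} of monotone coordinate-update maps on Fin n → Bool, the composition G_{π(n-1)} ∘ ⋯ ∘ G_{π(1)} ∘ G_{π(0)} is not equal to F. -/

import Mathlib

/-- The SDS map `G_{π(n-1)} ∘ ⋯ ∘ G_{π(1)} ∘ G_{π(0)}`: vertex `π 0` is updated first. -/
def seqComp {n : ℕ} (G : Fin n → (Fin n → Bool) → (Fin n → Bool))
    (π : Equiv.Perm (Fin n)) (X : Fin n → Bool) : Fin n → Bool :=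
  (List.finRange n).foldl (fun Y i => G (π i) Y) X

theorem stmt_16 :
    ∃ (n : ℕ), 1 ≤ n ∧ ∃ F : (Fin n → Bool) → (Fin n → Bool), Monotone F ∧
      ∀ (π : Equiv.Perm (Fin n)) (G : Fin n → (Fin n → Bool) → (Fin n → Bool)),
        (∀ (i : Fin n) (X : Fin n → Bool) (j : Fin n), j ≠ i → G i X j = X j) →
        (∀ i : Fin n, Monotone (G i)) →
        seqComp G π ≠ F := by
  refine ⟨2, by norm_num, fun X i => X (i + 1), fun X Y h i => h (i + 1), ?_⟩
  intro π G hG _ hF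
  have hab : π 0 ≠ π 1 := fun h => absurd (π.injective h) (by decide)
  have key : ∀ a b : Fin 2, a ≠ b → a + 1 = b ∧ b + 1 = a := by decide
  have cov : ∀ a b : Fin 2, a ≠ b → ∀ j, j = a ∨ j = b := by decide
  generalize ha : π 0 = a at hab
  generalize hb : π 1 = b at hab
  obtain ⟨h1, h2⟩ := key a b hab
  have hs : ∀ X j, G b (G a X) j = X (j + 1) := by
    intro X j
    have := congrFun (congrFun hF X) j
    simpa [seqComp, List.finRange_succ, ha, hb] using this
  -- After the first update both coordinates carry the value `X b`.
  have hc : ∀ X, G a X = fun _ => X b := by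
    intro X
    funext j
    rcases cov a b hab j with rfl | rfl
    · have h := hs X j
      rw [hG b _ j hab, h1] at h
      exact h
    · exact hG a X j hab.symm
  have e1 := hs (fun _ => false) b
  have e2 := hs (fun j => decide (j = a)) b
  rw [hc] at e1 e2
  simp [h2, hab.symm] at e1 e2
  rw [e1] at e2
  exact absurd e2 (by decide)
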